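/- arXiv:math/0701880 — 2 statements merged into one kernel-verified Lean document; each statement's English description precedes it below -/
import Mathlib

section
/- For all M > 0 and λ > 0 there exists a constant C > 0 such that for all reals s ≤ t and all x, y ≥ −M, |∫_0^∞ e^{−z(t−s)} Ai(x+z) Ai(y+z) dz| ≤ C e^{−λ(x+y)}. -/
/-!
The bound reduces to exponential decay of the Airy function at every rate: for each `σ > 0` there
is a constant `K` with `|Ai x| ≤ K e^{-σx}` for all real `x` (`exists_abs_Ai_le`).

To see this, put `f(w) = exp(i(w³/3 + xw))`, so that the integrand of `Ai` is `Re f` on the real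
axis, and apply Cauchy's theorem to the rectangle with corners `0` and `R + iσ`. On the left side
`f` is real, so that side contributes nothing to the real part. On the right side
`|f(R + iu)| = exp(-R²u + u³/3 - xu)`, so its contribution vanishes as `R → ∞`. On the top side
`|f(t + iσ)| = exp(-σt²) exp(σ³/3 - σx)`, which is integrable in `t`. Hence
`π Ai x = Re ∫_0^∞ f(t + iσ) dt`, and the Gaussian bound gives the decay.

Taking `σ = λ`, the kernel's integrand is at most `K² e^{-λ(x+y)} e^{-2λz}` in absolute value
because `e^{-z(t-s)} ≤ 1`, and integrating in `z` gives `C = K²/(2λ)`.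
-/

open MeasureTheory Real Filter

/-- The Airy function `Ai(x) = (1/π)·lim_{R→∞} ∫_0^R cos(t³/3 + x·t) dt`. -/
noncomputable def Ai (x : ℝ) : ℝ :=
  (1 / Real.pi) * limUnder Filter.atTop
    (fun R : ℝ => ∫ t in (0:ℝ)..R, Real.cos (t ^ 3 / 3 + x * t))

open Topology

/-- The entire function `w ↦ exp(i(w³/3 + xw))`, whose real part on the real axis is the
integrand of `Ai x`. -/
noncomputable def airyPhase (x : ℝ) (w : ℂ) : ℂ :=
  Complex.exp (Complex.I * (w ^ 3 / 3 + x * w))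

lemma airyPhase_eq (x t u : ℝ) : airyPhase x (t + u * Complex.I) =
    Complex.exp (((-(t ^ 2 * u) + u ^ 3 / 3 - x * u : ℝ) : ℂ)
      + ((t ^ 3 / 3 - t * u ^ 2 + x * t : ℝ) : ℂ) * Complex.I) := by
  unfold airyPhase
  congr 1
  push_cast
  linear_combination (-(u : ℂ) ^ 3 / 3 + (t : ℂ) ^ 2 * u + x * u + t * u ^ 2 * Complex.I
    + u ^ 3 / 3 * Complex.I ^ 2) * Complex.I_sq

lemma norm_airyPhase (x t u : ℝ) : ‖airyPhase x (t + u * Complex.I)‖ =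
    Real.exp (-(t ^ 2 * u) + u ^ 3 / 3 - x * u) := by
  rw [airyPhase_eq, Complex.norm_exp]
  simp only [Complex.add_re, Complex.re_ofReal_mul, Complex.I_re, Complex.ofReal_re, mul_zero,
    add_zero]

lemma airyPhase_re (x t : ℝ) : (airyPhase x t).re = Real.cos (t ^ 3 / 3 + x * t) := by
  have h := airyPhase_eq x t 0
  simp only [Complex.ofReal_zero, zero_mul, add_zero] at h
  rw [h, Complex.exp_re]
  simp only [Complex.add_re, Complex.add_im, Complex.re_ofReal_mul, Complex.im_ofReal_mul,
    Complex.I_re, Complex.I_im, Complex.ofReal_re, Complex.ofReal_im]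
  simp

lemma airyPhase_imag_axis (x u : ℝ) :
    airyPhase x (u * Complex.I) = (Real.exp (u ^ 3 / 3 - x * u) : ℝ) := by
  have h := airyPhase_eq x 0 u
  simp only [Complex.ofReal_zero, zero_add] at h
  rw [h, Complex.ofReal_exp]
  simp

lemma differentiable_airyPhase (x : ℝ) : Differentiable ℂ (airyPhase x) := by
  unfold airyPhase
  fun_prop

lemma continuous_airyPhase (x : ℝ) : Continuous (airyPhase x) :=
  (differentiable_airyPhase x).continuous

/-- Cauchy's theorem on the rectangle with corners `0` and `R + iσ`, in real part. -/
lemma integral_cos_eq (x σ R : ℝ) :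
    ∫ t in (0:ℝ)..R, Real.cos (t ^ 3 / 3 + x * t) =
      (∫ t in (0:ℝ)..R, airyPhase x (t + σ * Complex.I)).re
      - (Complex.I * ∫ u in (0:ℝ)..σ, airyPhase x (R + u * Complex.I)).re := by
  have h := Complex.integral_boundary_rect_eq_zero_of_differentiableOn (airyPhase x) 0
    (R + σ * Complex.I) (differentiable_airyPhase x).differentiableOn
  simp only [Complex.zero_re, Complex.zero_im, Complex.add_re, Complex.add_im, Complex.ofReal_re,
    Complex.ofReal_im, Complex.re_ofReal_mul, Complex.im_ofReal_mul, Complex.I_re, Complex.I_im,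
    mul_zero, mul_one, add_zero, zero_add, Complex.ofReal_zero, zero_mul, smul_eq_mul,
    airyPhase_imag_axis] at h
  rw [intervalIntegral.integral_ofReal] at h
  have h1 : ∫ t in (0:ℝ)..R, Real.cos (t ^ 3 / 3 + x * t) =
      (∫ t in (0:ℝ)..R, airyPhase x t).re := by
    simp_rw [← airyPhase_re]
    have := Complex.reCLM.intervalIntegral_comp_comm (μ := volume) (a := 0) (b := R)
      (f := fun t : ℝ => airyPhase x t)
      (((continuous_airyPhase x).comp Complex.continuous_ofReal).intervalIntegrable _ _)
    simpa using this
  have h2 := congrArg Complex.re h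
  simp only [Complex.sub_re, Complex.add_re, Complex.zero_re, Complex.re_mul_ofReal, Complex.I_re,
    zero_mul, sub_zero] at h2
  rw [h1]
  linarith

/-- The right side of the rectangle contributes nothing in the limit. -/
lemma tendsto_integral_right_side (x σ : ℝ) (hσ : 0 < σ) :
    Tendsto (fun R : ℝ => ∫ u in (0:ℝ)..σ, airyPhase x (R + u * Complex.I)) atTop (𝓝 0) := by
  have h := intervalIntegral.tendsto_integral_filter_of_dominated_convergence (μ := volume)
    (a := 0) (b := σ) (l := (atTop : Filter ℝ))
    (F := fun R u : ℝ => airyPhase x (R + u * Complex.I)) (f := fun _ => 0)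
    (fun u => Real.exp (u ^ 3 / 3 - x * u)) ?_ ?_ ?_ ?_
  · simpa using h
  · refine Eventually.of_forall fun R => Continuous.aestronglyMeasurable ?_
    exact (continuous_airyPhase x).comp (by fun_prop)
  · refine Eventually.of_forall fun R => Eventually.of_forall fun u hu => ?_
    rw [Set.uIoc_of_le hσ.le] at hu
    rw [norm_airyPhase]
    apply Real.exp_le_exp.2
    have : 0 ≤ R ^ 2 * u := mul_nonneg (sq_nonneg R) hu.1.le
    linarith
  · exact Continuous.intervalIntegrable (by fun_prop) _ _
  · refine Eventually.of_forall fun u hu => ?_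
    rw [Set.uIoc_of_le hσ.le] at hu
    rw [tendsto_zero_iff_norm_tendsto_zero]
    simp_rw [norm_airyPhase]
    apply Real.tendsto_exp_atBot.comp
    have h1 : Tendsto (fun R : ℝ => R ^ 2 * u) atTop atTop :=
      (tendsto_pow_atTop two_ne_zero).atTop_mul_const hu.1
    have h2 := tendsto_atBot_add_const_right atTop (u ^ 3 / 3 - x * u)
      (tendsto_neg_atTop_atBot.comp h1)
    refine h2.congr fun R => ?_
    simp only [Function.comp_apply]
    ring

lemma norm_airyPhase_top (x σ t : ℝ) : ‖airyPhase x (t + σ * Complex.I)‖ =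
    Real.exp (-σ * t ^ 2) * (Real.exp (σ ^ 3 / 3) * Real.exp (-σ * x)) := by
  rw [norm_airyPhase, ← Real.exp_add, ← Real.exp_add]
  congr 1
  ring

lemma integrableOn_airyPhase_top (x σ : ℝ) (hσ : 0 < σ) :
    IntegrableOn (fun t : ℝ => airyPhase x (t + σ * Complex.I)) (Set.Ioi 0) := by
  refine Integrable.mono' (((integrable_exp_neg_mul_sq hσ).mul_const
    (Real.exp (σ ^ 3 / 3) * Real.exp (-σ * x))).integrableOn) ?_ ?_
  · exact ((continuous_airyPhase x).comp (by fun_prop)).aestronglyMeasurable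
  · exact Eventually.of_forall fun t => (norm_airyPhase_top x σ t).le

/-- The contour-shifted representation of the Airy function. -/
lemma Ai_eq (x σ : ℝ) (hσ : 0 < σ) :
    Ai x = (1 / Real.pi) * (∫ t in Set.Ioi (0:ℝ), airyPhase x (t + σ * Complex.I)).re := by
  unfold Ai
  congr 1
  apply Tendsto.limUnder_eq
  simp_rw [integral_cos_eq x σ]
  have h1 := intervalIntegral_tendsto_integral_Ioi 0 (integrableOn_airyPhase_top x σ hσ)
    tendsto_id
  have h2 := (tendsto_integral_right_side x σ hσ).const_mul Complex.I
  have h3 := ((Complex.continuous_re.tendsto _).comp h1).sub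
    ((Complex.continuous_re.tendsto _).comp h2)
  simpa using h3

/-- The Airy function decays exponentially at every rate, with a bound valid on all of `ℝ`. -/
lemma exists_abs_Ai_le (σ : ℝ) (hσ : 0 < σ) :
    ∃ K > 0, ∀ x : ℝ, |Ai x| ≤ K * Real.exp (-σ * x) := by
  have hG : 0 ≤ ∫ t in Set.Ioi (0:ℝ), Real.exp (-σ * t ^ 2) :=
    integral_nonneg fun t => (Real.exp_pos _).le
  -- Adding `1` makes the constant visibly positive.
  refine ⟨(1 / Real.pi) * (∫ t in Set.Ioi (0:ℝ), Real.exp (-σ * t ^ 2)) * Real.exp (σ ^ 3 / 3) + 1,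
    by positivity, fun x => ?_⟩
  have h1 : |(∫ t in Set.Ioi (0:ℝ), airyPhase x (t + σ * Complex.I)).re| ≤
      (∫ t in Set.Ioi (0:ℝ), Real.exp (-σ * t ^ 2)) *
        (Real.exp (σ ^ 3 / 3) * Real.exp (-σ * x)) := by
    refine (Complex.abs_re_le_norm _).trans ((norm_integral_le_integral_norm _).trans ?_)
    simp_rw [norm_airyPhase_top]
    rw [integral_mul_const]
  rw [Ai_eq x σ hσ, abs_mul, abs_of_pos (by positivity : 0 < 1 / Real.pi)]
  have h2 := mul_le_mul_of_nonneg_left h1 (by positivity : 0 ≤ 1 / Real.pi)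
  have h3 := Real.exp_pos (-σ * x)
  linarith

/-- For all `M > 0` and `λ > 0` there exists `C > 0` such that for all reals `s ≤ t`
and all `x, y ≥ −M`, `|∫_0^∞ e^{−z(t−s)} Ai(x+z) Ai(y+z) dz| ≤ C e^{−λ(x+y)}`. -/
theorem airy_kernel_exp_bound (M lam : ℝ) (hM : 0 < M) (hlam : 0 < lam) :
    ∃ C > 0, ∀ s t x y : ℝ, s ≤ t → -M ≤ x → -M ≤ y →
      |∫ z in Set.Ioi (0:ℝ), Real.exp (-z * (t - s)) * Ai (x + z) * Ai (y + z)| ≤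
        C * Real.exp (-lam * (x + y)) := by
  obtain ⟨K, hK, hAi⟩ := exists_abs_Ai_le lam hlam
  refine ⟨K ^ 2 / (2 * lam), by positivity, fun s t x y hst _ _ => ?_⟩
  have hneg : -(2 * lam) < 0 := by linarith
  have hint : IntegrableOn (fun z : ℝ => Real.exp (-(2 * lam) * z) *
      (K ^ 2 * Real.exp (-lam * (x + y)))) (Set.Ioi 0) :=
    (integrableOn_exp_mul_Ioi hneg 0).mul_const _
  rw [← Real.norm_eq_abs]
  refine (norm_integral_le_of_norm_le hint ?_).trans (le_of_eq ?_)
  · refine (ae_restrict_iff' measurableSet_Ioi).2 (Eventually.of_forall fun z hz => ?_)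
    have hz : 0 < z := hz
    have he : Real.exp (-z * (t - s)) ≤ 1 :=
      Real.exp_le_one_iff.2 (by nlinarith)
    rw [Real.norm_eq_abs, abs_mul, abs_mul, Real.abs_exp]
    calc Real.exp (-z * (t - s)) * |Ai (x + z)| * |Ai (y + z)|
        ≤ 1 * (K * Real.exp (-lam * (x + z))) * (K * Real.exp (-lam * (y + z))) := by
          gcongr
          · exact hAi _
          · exact hAi _
      _ = K ^ 2 * (Real.exp (-lam * (x + z)) * Real.exp (-lam * (y + z))) := by ring
      _ = K ^ 2 * (Real.exp (-(2 * lam) * z) * Real.exp (-lam * (x + y))) := by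
          rw [← Real.exp_add, ← Real.exp_add]
          ring_nf
      _ = _ := by ring
  · rw [integral_mul_const, integral_exp_mul_Ioi hneg]
    simp only [mul_zero, Real.exp_zero]
    field_simp
end

section
/- Define F : ℝ → ℝ by F(t) = Σ_{k=0}^∞ ((−1)^k/k!) ∫_{(t,∞)^k} det[A(x_a,x_b)]_{1≤a,b≤k} dx₁⋯dx_k, where A is the Airy kernel (F is the Fredholm-series expression of the Tracy–Widom GUE distribution function). Then for every t ∈ ℝ the series defining F converges absolutely, F is differentiable at t, and F′(t) = Σ_{k=0}^∞ ((−1)^k/k!) ∫_{(t,∞)^k} det[A(x_a,x_b)]_{0≤a,b≤k} dx₁⋯dx_k, where in the last determinant x₀ = t. -/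
/-!
Cauchy's theorem moves the Airy integral from the real axis to the line `Im ζ = 1`, where the
integrand is dominated by a Gaussian (`Ai_eq`). Hence `Ai` is continuous with
`|Ai x| ≤ C e^{-x}` for all real `x`, and the Airy kernel is continuous with
`|A(x, y)| ≤ C' e^{-x} e^{-y}` (`airyKernel_props`). Nothing else about `A` is used.

For a kernel `K` with these two properties, Hadamard's inequality gives
`|det [K(x_a, x_b)]| ≤ (C √k)^k ∏ e^{-2 x_a}` (`kdet_bound`). As `k^k ≤ e^k k!`, the integrals of
this bound are summable against `1/k!`, locally uniformly in the left endpoint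
(`summable_hadamard`), which gives absolute convergence.

Write `I_k(u)` for the integral of the `k × k` determinant over `(u, ∞)^k`, and `J_k(u)` for that of
the `(k+1) × (k+1)` determinant with `x₀ = u`. Up to a null set, `(u, ∞)^{k+1}` is the disjoint
union of the `k + 1` regions on which a given coordinate is the strict minimum. By symmetry of the
determinant and Fubini, each of them contributes `∫_u^∞ J_k(s) ds`, so
`I_{k+1}(u) = (k+1) ∫_u^∞ J_k(s) ds` (`fredI_succ`). Since `J_k` is continuous,
`I_{k+1}' = -(k+1) J_k`, and the series may be differentiated term by term
(`fredholm_hasDerivAt`).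
-/

open MeasureTheory Real Filter

/-- The Airy kernel `A(x,y) = ∫_0^∞ Ai(x+z)·Ai(y+z) dz`. -/
noncomputable def airyKernel (x y : ℝ) : ℝ :=
  ∫ z in Set.Ioi (0:ℝ), Ai (x + z) * Ai (y + z)

/-! ### The Airy function and the Airy kernel -/

open Complex in
/-- Real and imaginary parts of the exponent `i(ζ³/3 + xζ)` at `ζ = u + iy`. -/
lemma airy_phase (x u y : ℝ) :
    cexp (I * (((u : ℂ) + y * I) ^ 3 / 3 + x * ((u : ℂ) + y * I)))
      = cexp ((y ^ 3 / 3 - u ^ 2 * y - x * y : ℝ)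
          + (u ^ 3 / 3 - u * y ^ 2 + x * u : ℝ) * I) := by
  congr 1
  push_cast
  have h2 : I ^ 2 = -1 := I_sq
  have h3 : I ^ 3 = -I := by rw [pow_succ, h2]; ring
  have h4 : I ^ 4 = 1 := I_pow_four
  ring_nf
  simp only [h2, h3, h4]
  ring

open Complex in
lemma airy_phase_re (x u y : ℝ) :
    (cexp (I * (((u : ℂ) + y * I) ^ 3 / 3 + x * ((u : ℂ) + y * I)))).re
      = Real.exp (y ^ 3 / 3 - u ^ 2 * y - x * y) *
          Real.cos (u ^ 3 / 3 - u * y ^ 2 + x * u) := by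
  rw [airy_phase, Complex.exp_re]
  simp [-ofReal_sub, -ofReal_add]

open Complex in
lemma airy_phase_im_zero (x y : ℝ) :
    (cexp (I * (((0 : ℝ) + y * I : ℂ) ^ 3 / 3 + x * (((0 : ℝ) : ℂ) + y * I)))).im = 0 := by
  rw [airy_phase, Complex.exp_im]
  simp [-ofReal_sub, -ofReal_add]

open Complex in
lemma norm_airy_phase (x u y : ℝ) :
    ‖cexp (I * (((u : ℂ) + y * I) ^ 3 / 3 + x * ((u : ℂ) + y * I)))‖
      = Real.exp (y ^ 3 / 3 - u ^ 2 * y - x * y) := by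
  rw [airy_phase, Complex.norm_exp]
  simp [-ofReal_sub, -ofReal_add]

open Complex in
/-- Cauchy's theorem for `e^{i(ζ³/3 + xζ)}` on the rectangle with corners `0` and `R + i`, in real
parts. The integrand is real on the imaginary axis, so that the left side drops out. -/
lemma airy_contour (x R : ℝ) :
    ∫ t in (0:ℝ)..R, Real.cos (t ^ 3 / 3 + x * t)
      = (∫ t in (0:ℝ)..R, Real.exp (1 / 3 - t ^ 2 - x) * Real.cos (t ^ 3 / 3 - t + x * t))
        + (∫ y in (0:ℝ)..1,
            cexp (I * (((R : ℂ) + y * I) ^ 3 / 3 + x * ((R : ℂ) + y * I)))).im := by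
  set f : ℂ → ℂ := fun z => cexp (I * (z ^ 3 / 3 + x * z)) with hf
  have hfd : Differentiable ℂ f := by
    rw [hf]; fun_prop
  have hfc : Continuous f := hfd.continuous
  have key := Complex.integral_boundary_rect_eq_zero_of_differentiableOn f 0 (R + I)
    hfd.differentiableOn
  simp only [zero_re, zero_im, add_re, ofReal_re, I_re, add_zero, add_im, ofReal_im, I_im,
    zero_add] at key
  have key2 := congrArg Complex.re key
  simp only [add_re, sub_re, smul_eq_mul, I_mul_re, zero_re] at key2
  have h1 : (∫ u in (0:ℝ)..R, f (u + (0:ℝ) * I)).re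
      = ∫ t in (0:ℝ)..R, Real.cos (t ^ 3 / 3 + x * t) := by
    have := intervalIntegral.intervalIntegral_re (μ := volume) (a := 0) (b := R)
      (f := fun u : ℝ => f (u + (0:ℝ) * I))
      (by apply Continuous.intervalIntegrable; fun_prop)
    rw [← RCLike.re_eq_complex_re, ← this]
    congr 1; ext u
    simp only [hf, RCLike.re_eq_complex_re]
    rw [airy_phase_re]; simp
  have h2 : (∫ u in (0:ℝ)..R, f (u + (1:ℝ) * I)).re
      = ∫ t in (0:ℝ)..R, Real.exp (1 / 3 - t ^ 2 - x) * Real.cos (t ^ 3 / 3 - t + x * t) := by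
    have := intervalIntegral.intervalIntegral_re (μ := volume) (a := 0) (b := R)
      (f := fun u : ℝ => f (u + (1:ℝ) * I))
      (by apply Continuous.intervalIntegrable; fun_prop)
    rw [← RCLike.re_eq_complex_re, ← this]
    congr 1; ext u
    simp only [hf, RCLike.re_eq_complex_re]
    rw [airy_phase_re]; simp
  have h3 : (∫ y in (0:ℝ)..1, f ((0:ℝ) + y * I)).im = 0 := by
    have := intervalIntegral.intervalIntegral_im (μ := volume) (a := 0) (b := 1)
      (f := fun y : ℝ => f ((0:ℝ) + y * I))
      (by apply Continuous.intervalIntegrable; fun_prop)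
    rw [← RCLike.im_eq_complex_im, ← this]
    simp only [hf, RCLike.im_eq_complex_im, airy_phase_im_zero]
    simp
  rw [h1, h2, h3] at key2
  linarith

open Complex in
/-- The vertical side of the contour at abscissa `R` does not contribute in the limit. -/
lemma airy_edge (x : ℝ) :
    Tendsto (fun R : ℝ => (∫ y in (0:ℝ)..1,
            cexp (I * (((R : ℂ) + y * I) ^ 3 / 3 + x * ((R : ℂ) + y * I)))).im) atTop (nhds 0) := by
  have h : Tendsto (fun R : ℝ => (∫ y in (0:ℝ)..1,
      cexp (I * (((R : ℂ) + y * I) ^ 3 / 3 + x * ((R : ℂ) + y * I))))) atTop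
      (nhds (∫ _y in (0:ℝ)..1, (0:ℂ))) := by
    apply intervalIntegral.tendsto_integral_filter_of_dominated_convergence
      (fun _ => Real.exp (1 / 3 + |x|))
    · refine Eventually.of_forall fun R => Continuous.aestronglyMeasurable ?_
      fun_prop
    · refine Eventually.of_forall fun R => Eventually.of_forall fun y hy => ?_
      rw [Set.uIoc_of_le zero_le_one] at hy
      rw [norm_airy_phase, Real.exp_le_exp]
      have h1 : y ^ 3 ≤ 1 := pow_le_one₀ hy.1.le hy.2
      have h2 : 0 ≤ R ^ 2 * y := mul_nonneg (sq_nonneg _) hy.1.le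
      have h3 : -(x * y) ≤ |x| := by
        calc -(x * y) ≤ |x * y| := neg_le_abs _
          _ = |x| * y := by rw [abs_mul, abs_of_pos hy.1]
          _ ≤ |x| := mul_le_of_le_one_right (abs_nonneg _) hy.2
      linarith
    · exact intervalIntegrable_const
    · refine Eventually.of_forall fun y hy => ?_
      rw [Set.uIoc_of_le zero_le_one] at hy
      rw [tendsto_zero_iff_norm_tendsto_zero]
      simp only [norm_airy_phase]
      apply Real.tendsto_exp_atBot.comp
      have : Tendsto (fun R : ℝ => R ^ 2 * y) atTop atTop :=
        (tendsto_pow_atTop two_ne_zero).atTop_mul_const hy.1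
      have h2 := tendsto_atBot_add_const_left atTop (y ^ 3 / 3 - x * y)
        (tendsto_neg_atTop_atBot.comp this)
      refine h2.congr fun R => ?_
      simp only [Function.comp]
      ring
  simp only [intervalIntegral.integral_zero] at h
  simpa [Function.comp_def] using (Complex.continuous_im.tendsto 0).comp h

/-- The integrand of the Airy function on the line `Im ζ = 1`, without the factor `e^{1/3 - x}`. -/
noncomputable def airyIntegrand (x u : ℝ) : ℝ :=
  Real.exp (-u ^ 2) * Real.cos (u ^ 3 / 3 - u + x * u)

lemma continuous_airyIntegrand : Continuous fun p : ℝ × ℝ => airyIntegrand p.1 p.2 := by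
  unfold airyIntegrand; fun_prop

lemma abs_airyIntegrand_le (x u : ℝ) : |airyIntegrand x u| ≤ Real.exp (-u ^ 2) := by
  unfold airyIntegrand
  rw [abs_mul, abs_of_pos (Real.exp_pos _)]
  exact mul_le_of_le_one_right (Real.exp_pos _).le (Real.abs_cos_le_one _)

lemma integrable_exp_neg_sq : Integrable fun u : ℝ => Real.exp (-u ^ 2) := by
  simpa using integrable_exp_neg_mul_sq (b := 1) one_pos

lemma integrable_airyIntegrand (x : ℝ) : Integrable (airyIntegrand x) := by
  refine integrable_exp_neg_sq.mono' ?_ (Eventually.of_forall fun u => ?_)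
  · exact (continuous_airyIntegrand.comp (Continuous.prodMk_right x)).aestronglyMeasurable
  · exact abs_airyIntegrand_le x u

/-- Absolutely convergent form of the Airy integral, from moving the contour to `Im ζ = 1`. -/
lemma Ai_eq_s15 (x : ℝ) :
    Ai x = (1 / Real.pi) * (Real.exp (1 / 3 - x) * ∫ u in Set.Ioi (0:ℝ), airyIntegrand x u) := by
  unfold Ai
  congr 1
  apply Tendsto.limUnder_eq
  simp_rw [airy_contour]
  rw [← add_zero (Real.exp (1 / 3 - x) * _)]
  refine Tendsto.add ?_ (airy_edge x)
  have h := (intervalIntegral_tendsto_integral_Ioi 0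
    (integrable_airyIntegrand x).integrableOn tendsto_id).const_mul (Real.exp (1 / 3 - x))
  refine h.congr fun R => ?_
  rw [← intervalIntegral.integral_const_mul]
  congr 1; ext u
  unfold airyIntegrand
  rw [← mul_assoc, ← Real.exp_add]
  congr 2
  ring

lemma continuous_Ai : Continuous Ai := by
  have : Ai = fun x => (1 / Real.pi) *
      (Real.exp (1 / 3 - x) * ∫ u in Set.Ioi (0:ℝ), airyIntegrand x u) := funext Ai_eq_s15
  rw [this]
  have hc : Continuous fun x => ∫ u in Set.Ioi (0:ℝ), airyIntegrand x u := by
    apply continuous_of_dominated (bound := fun u => Real.exp (-u ^ 2))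
    · exact fun x => (integrable_airyIntegrand x).aestronglyMeasurable.restrict
    · exact fun x => Eventually.of_forall fun u => abs_airyIntegrand_le x u
    · exact integrable_exp_neg_sq.restrict
    · exact Eventually.of_forall fun u => continuous_airyIntegrand.comp (Continuous.prodMk_left u)
  fun_prop

lemma exists_Ai_bound : ∃ C : ℝ, 0 ≤ C ∧ ∀ x, |Ai x| ≤ C * Real.exp (-x) := by
  refine ⟨1 / Real.pi * (Real.exp (1 / 3) * ∫ u in Set.Ioi (0:ℝ), Real.exp (-u ^ 2)), ?_, ?_⟩
  · have : 0 ≤ ∫ u in Set.Ioi (0:ℝ), Real.exp (-u ^ 2) :=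
      integral_nonneg fun u => (Real.exp_pos _).le
    positivity
  · intro x
    have h : |∫ u in Set.Ioi (0:ℝ), airyIntegrand x u| ≤
        ∫ u in Set.Ioi (0:ℝ), Real.exp (-u ^ 2) := by
      rw [← Real.norm_eq_abs]
      exact norm_integral_le_of_norm_le integrable_exp_neg_sq.restrict
        (Eventually.of_forall fun u => abs_airyIntegrand_le x u)
    rw [Ai_eq_s15, abs_mul, abs_mul, abs_of_pos (Real.exp_pos _), abs_of_pos (by positivity),
      sub_eq_add_neg, Real.exp_add]
    calc _ ≤ 1 / Real.pi * (Real.exp (1 / 3) * Real.exp (-x) *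
          ∫ u in Set.Ioi (0:ℝ), Real.exp (-u ^ 2)) := by gcongr
      _ = _ := by ring

/-- The kernel is continuous and dominated by a rank-one exponentially decaying kernel. -/
lemma airyKernel_props :
    (Continuous fun p : ℝ × ℝ => airyKernel p.1 p.2) ∧
      ∃ C : ℝ, 0 ≤ C ∧ ∀ x y, |airyKernel x y| ≤ C * (Real.exp (-x) * Real.exp (-y)) := by
  obtain ⟨C, hC, hA⟩ := exists_Ai_bound
  have hint : IntegrableOn (fun z : ℝ => Real.exp (-2 * z)) (Set.Ioi 0) :=
    integrableOn_exp_mul_Ioi (by norm_num) 0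
  have hb : ∀ x y z : ℝ, |Ai (x + z) * Ai (y + z)|
      ≤ C ^ 2 * (Real.exp (-x) * Real.exp (-y)) * Real.exp (-2 * z) := by
    intro x y z
    rw [abs_mul]
    calc _ ≤ (C * Real.exp (-(x + z))) * (C * Real.exp (-(y + z))) :=
          mul_le_mul (hA _) (hA _) (abs_nonneg _) (by positivity)
      _ = C ^ 2 * (Real.exp (-x) * Real.exp (-y)) * Real.exp (-2 * z) := by
          have h : Real.exp (-2 * z) = Real.exp (-z) * Real.exp (-z) := by
            rw [← Real.exp_add]; ring_nf
          rw [neg_add, neg_add, Real.exp_add, Real.exp_add, h]; ring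
  have hcA := continuous_Ai
  constructor
  · rw [continuous_iff_continuousAt]
    rintro ⟨a, b⟩
    refine continuousAt_of_dominated
      (bound := fun z => C ^ 2 * (Real.exp (-(a - 1)) * Real.exp (-(b - 1))) * Real.exp (-2 * z))
      ?_ ?_ (hint.const_mul _) ?_
    · refine Eventually.of_forall fun p => Continuous.aestronglyMeasurable ?_
      fun_prop
    · have h1 : ∀ᶠ p : ℝ × ℝ in nhds (a, b), a - 1 < p.1 :=
        continuous_fst.continuousAt.eventually (lt_mem_nhds (by simp))
      have h2 : ∀ᶠ p : ℝ × ℝ in nhds (a, b), b - 1 < p.2 :=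
        continuous_snd.continuousAt.eventually (lt_mem_nhds (by simp))
      filter_upwards [h1, h2] with p hp1 hp2
      refine Eventually.of_forall fun z => (hb p.1 p.2 z).trans ?_
      gcongr
    · exact Eventually.of_forall fun z => Continuous.continuousAt (by fun_prop)
  · refine ⟨C ^ 2 * ∫ z in Set.Ioi (0:ℝ), Real.exp (-2 * z), ?_, fun x y => ?_⟩
    · have : 0 ≤ ∫ z in Set.Ioi (0:ℝ), Real.exp (-2 * z) :=
        integral_nonneg fun u => (Real.exp_pos _).le
      positivity
    · have h : |airyKernel x y| ≤ ∫ z in Set.Ioi (0:ℝ),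
          C ^ 2 * (Real.exp (-x) * Real.exp (-y)) * Real.exp (-2 * z) := by
        rw [← Real.norm_eq_abs]
        exact norm_integral_le_of_norm_le (hint.const_mul _)
          (Eventually.of_forall fun z => hb x y z)
      rw [integral_const_mul] at h
      linarith

/-! ### Determinants of a kernel with exponential decay -/

/-- The `k × k` determinant `det [K(x_a, x_b)]`. -/
noncomputable def kdet (K : ℝ → ℝ → ℝ) {k : ℕ} (x : Fin k → ℝ) : ℝ :=
  Matrix.det (Matrix.of fun a b : Fin k => K (x a) (x b))

/-- The integral of the `k × k` determinant over `(u, ∞)^k`. -/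
noncomputable def fredI (K : ℝ → ℝ → ℝ) (k : ℕ) (u : ℝ) : ℝ :=
  ∫ x : Fin k → ℝ in Set.univ.pi fun _ => Set.Ioi u, kdet K x

/-- The integral over `(u, ∞)^k` of the `(k+1) × (k+1)` determinant whose zeroth point is `u`. -/
noncomputable def fredJ (K : ℝ → ℝ → ℝ) (k : ℕ) (u : ℝ) : ℝ :=
  ∫ x : Fin k → ℝ in Set.univ.pi fun _ => Set.Ioi u, kdet K (Fin.cons u x : Fin (k + 1) → ℝ)

/-- Hadamard's inequality. -/
lemma abs_det_le_prod_norm {k : ℕ} (M : Matrix (Fin k) (Fin k) ℝ) :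
    |M.det| ≤ ∏ i, ‖(WithLp.toLp 2 (M i) : EuclideanSpace ℝ (Fin k))‖ := by
  have : Fact (Module.finrank ℝ (EuclideanSpace ℝ (Fin k)) = k) := ⟨by simp⟩
  let b := EuclideanSpace.basisFun (Fin k) ℝ
  let o := b.toBasis.orientation
  have h1 := o.abs_volumeForm_apply_le (fun i => WithLp.toLp 2 (M i))
  rw [o.volumeForm_robust' b, Module.Basis.det_apply, ← Matrix.det_transpose] at h1
  convert h1 using 3
  ext i j
  simp [b, Module.Basis.toMatrix_apply]

lemma abs_det_le_of_entries {k : ℕ} (M : Matrix (Fin k) (Fin k) ℝ) {c : ℝ} (hc : 0 ≤ c)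
    (h : ∀ i j, |M i j| ≤ c) : |M.det| ≤ (c * √k) ^ k := by
  refine (abs_det_le_prod_norm M).trans ?_
  calc _ ≤ ∏ _i : Fin k, (c * √k) := by
        refine Finset.prod_le_prod (fun i _ => norm_nonneg _) fun i _ => ?_
        rw [EuclideanSpace.norm_eq]
        have : c * √k = √(∑ _j : Fin k, c ^ 2) := by
          rw [Finset.sum_const, Finset.card_univ, Fintype.card_fin, nsmul_eq_mul, mul_comm (k : ℝ),
            Real.sqrt_mul (sq_nonneg c), Real.sqrt_sq hc]
        rw [this]
        refine Real.sqrt_le_sqrt (Finset.sum_le_sum fun j _ => ?_)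
        exact pow_le_pow_left₀ (norm_nonneg _) (h i j) 2
    _ = _ := by simp

/-- Hadamard's inequality for the matrix `K(x_a, x_b) e^{x_a} e^{x_b}`, whose entries are at most
`C` in absolute value, with the exponential factors taken out of the rows and columns. -/
lemma kdet_bound {K : ℝ → ℝ → ℝ} {C : ℝ} (hC : 0 ≤ C)
    (hb : ∀ x y, |K x y| ≤ C * (Real.exp (-x) * Real.exp (-y))) {k : ℕ} (x : Fin k → ℝ) :
    |kdet K x| ≤ (C * √k) ^ k * ∏ i, Real.exp (-2 * x i) := by
  let N : Matrix (Fin k) (Fin k) ℝ :=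
    Matrix.of fun a b => K (x a) (x b) * (Real.exp (x a) * Real.exp (x b))
  have hN : |N.det| ≤ (C * √k) ^ k := by
    refine abs_det_le_of_entries N hC fun i j => ?_
    have hp : 0 < Real.exp (x i) * Real.exp (x j) := by positivity
    simp only [N, Matrix.of_apply, abs_mul, Real.abs_exp]
    calc _ ≤ C * (Real.exp (-x i) * Real.exp (-x j)) * (Real.exp (x i) * Real.exp (x j)) :=
          mul_le_mul_of_nonneg_right (hb _ _) hp.le
      _ = C := by
          rw [Real.exp_neg, Real.exp_neg]; field_simp
  have hdet : kdet K x = (∏ i, Real.exp (-x i)) * ((∏ i, Real.exp (-x i)) * N.det) := by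
    rw [← Matrix.det_mul_row, ← Matrix.det_mul_column]
    unfold kdet
    congr 1
    ext a b
    simp only [N, Matrix.of_apply]
    rw [Real.exp_neg, Real.exp_neg]; field_simp
  have hprod : (∏ i, Real.exp (-2 * x i)) = (∏ i, Real.exp (-x i)) * ∏ i, Real.exp (-x i) := by
    rw [← Finset.prod_mul_distrib]
    refine Finset.prod_congr rfl fun i _ => ?_
    rw [← Real.exp_add]; ring_nf
  have hpos : 0 < ∏ i, Real.exp (-x i) := Finset.prod_pos fun i _ => Real.exp_pos _
  rw [hdet, hprod, abs_mul, abs_mul, abs_of_pos hpos]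
  calc _ = (∏ i, Real.exp (-x i)) * (∏ i, Real.exp (-x i)) * |N.det| := by ring
    _ ≤ (∏ i, Real.exp (-x i)) * (∏ i, Real.exp (-x i)) * (C * √k) ^ k := by gcongr
    _ = _ := by ring

lemma continuous_kdet {K : ℝ → ℝ → ℝ} (hK : Continuous fun p : ℝ × ℝ => K p.1 p.2) {k : ℕ} :
    Continuous fun x : Fin k → ℝ => kdet K x := by
  unfold kdet
  apply Continuous.matrix_det
  refine continuous_matrix fun i j => ?_
  have h : Continuous fun x : Fin k → ℝ => (x i, x j) := by fun_prop
  exact hK.comp h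

lemma kdet_comp_equiv (K : ℝ → ℝ → ℝ) {k : ℕ} (x : Fin k → ℝ) (e : Fin k ≃ Fin k) :
    kdet K (fun i => x (e i)) = kdet K x := by
  unfold kdet
  exact Matrix.det_submatrix_equiv_self e (Matrix.of fun a b : Fin k => K (x a) (x b))

lemma kdet_insertNth (K : ℝ → ℝ → ℝ) {k : ℕ} (i : Fin (k + 1)) (s : ℝ) (y : Fin k → ℝ) :
    kdet K (i.insertNth s y : Fin (k + 1) → ℝ) = kdet K (Fin.cons s y : Fin (k + 1) → ℝ) := by
  rw [← kdet_comp_equiv K (Fin.cons s y : Fin (k + 1) → ℝ) i.cycleRange]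
  congr 1
  ext j
  refine Fin.succAboveCases i ?_ (fun j => ?_) j
  · simp
  · simp [Fin.cycleRange_succAbove]

lemma volume_restrict_octant (k : ℕ) (u : ℝ) :
    (volume : Measure (Fin k → ℝ)).restrict (Set.univ.pi fun _ => Set.Ioi u)
      = Measure.pi fun _ => volume.restrict (Set.Ioi u) := by
  rw [volume_pi, Measure.restrict_pi_pi]

lemma integrable_exp_prod (k : ℕ) (u : ℝ) :
    IntegrableOn (fun x : Fin k → ℝ => ∏ i, Real.exp (-2 * x i))
      (Set.univ.pi fun _ => Set.Ioi u) := by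
  unfold IntegrableOn
  rw [volume_restrict_octant]
  exact Integrable.fintype_prod (f := fun _ x => Real.exp (-2 * x))
    fun i => integrableOn_exp_mul_Ioi (by norm_num) u

lemma integral_exp_prod (k : ℕ) (u : ℝ) :
    ∫ x : Fin k → ℝ in Set.univ.pi fun _ => Set.Ioi u, ∏ i, Real.exp (-2 * x i)
      = (Real.exp (-2 * u) / 2) ^ k := by
  rw [volume_restrict_octant, integral_fintype_prod_eq_pow (fun x => Real.exp (-2 * x)),
    integral_exp_mul_Ioi (by norm_num), Fintype.card_fin]
  congr 1
  ring

lemma measurableSet_octant (k : ℕ) (u : ℝ) :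
    MeasurableSet (Set.univ.pi fun _ : Fin k => Set.Ioi u) :=
  MeasurableSet.univ_pi fun _ => measurableSet_Ioi

section
variable {K : ℝ → ℝ → ℝ} {C : ℝ}

lemma integrableOn_kdet (hK : Continuous fun p : ℝ × ℝ => K p.1 p.2) (hC : 0 ≤ C)
    (hb : ∀ x y, |K x y| ≤ C * (Real.exp (-x) * Real.exp (-y))) (k : ℕ) (u : ℝ) :
    IntegrableOn (fun x : Fin k → ℝ => kdet K x) (Set.univ.pi fun _ => Set.Ioi u) :=
  ((integrable_exp_prod k u).const_mul ((C * √k) ^ k)).mono'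
    (continuous_kdet hK).aestronglyMeasurable (Eventually.of_forall fun x => kdet_bound hC hb x)

lemma abs_fredI_le (hC : 0 ≤ C)
    (hb : ∀ x y, |K x y| ≤ C * (Real.exp (-x) * Real.exp (-y))) (k : ℕ) (u : ℝ) :
    |fredI K k u| ≤ (C * √k) ^ k * (Real.exp (-2 * u) / 2) ^ k := by
  rw [← integral_exp_prod, ← integral_const_mul, ← Real.norm_eq_abs]
  exact norm_integral_le_of_norm_le ((integrable_exp_prod k u).const_mul _)
    (Eventually.of_forall fun x => kdet_bound hC hb x)

lemma kdet_cons_bound (hC : 0 ≤ C)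
    (hb : ∀ x y, |K x y| ≤ C * (Real.exp (-x) * Real.exp (-y))) (k : ℕ) (s : ℝ) (y : Fin k → ℝ) :
    |kdet K (Fin.cons s y : Fin (k + 1) → ℝ)| ≤
      (C * √(k + 1 : ℕ)) ^ (k + 1) * Real.exp (-2 * s) * ∏ i, Real.exp (-2 * y i) := by
  refine (kdet_bound hC hb _).trans (le_of_eq ?_)
  rw [Fin.prod_univ_succ]
  simp [mul_assoc]

lemma abs_fredJ_le (hC : 0 ≤ C)
    (hb : ∀ x y, |K x y| ≤ C * (Real.exp (-x) * Real.exp (-y))) (k : ℕ) (u : ℝ) :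
    |fredJ K k u| ≤ (C * √(k + 1 : ℕ)) ^ (k + 1) * Real.exp (-2 * u)
      * (Real.exp (-2 * u) / 2) ^ k := by
  rw [← integral_exp_prod, ← integral_const_mul, ← Real.norm_eq_abs]
  exact norm_integral_le_of_norm_le ((integrable_exp_prod k u).const_mul _)
    (Eventually.of_forall fun x => kdet_cons_bound hC hb k u x)

/-- Translating the moving octant `(s, ∞)^k` to the fixed octant `(0, ∞)^k`. -/
lemma fredJ_eq_translate (k : ℕ) (s : ℝ) :
    fredJ K k s = ∫ y : Fin k → ℝ in Set.univ.pi fun _ => Set.Ioi 0,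
      kdet K (Fin.cons s (fun i => y i + s) : Fin (k + 1) → ℝ) := by
  unfold fredJ
  rw [← integral_indicator (measurableSet_octant k s), ← integral_indicator
    (measurableSet_octant k 0), ← integral_add_right_eq_self _ (fun _ : Fin k => s)]
  congr 1
  ext y
  simp only [Set.indicator, Set.mem_univ_pi, Set.mem_Ioi, Pi.add_apply, lt_add_iff_pos_left]
  rfl

lemma continuous_fredJ (hK : Continuous fun p : ℝ × ℝ => K p.1 p.2) (hC : 0 ≤ C)
    (hb : ∀ x y, |K x y| ≤ C * (Real.exp (-x) * Real.exp (-y))) (k : ℕ) :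
    Continuous (fredJ K k) := by
  have hcont : Continuous fun p : ℝ × (Fin k → ℝ) =>
      kdet K (Fin.cons p.1 (fun i => p.2 i + p.1) : Fin (k + 1) → ℝ) := by
    refine (continuous_kdet hK).comp (continuous_pi fun j => ?_)
    refine Fin.cases ?_ (fun j => ?_) j
    · simpa using continuous_fst
    · simp only [Fin.cons_succ]; fun_prop
  rw [funext (fredJ_eq_translate (K := K) k), continuous_iff_continuousAt]
  intro a
  refine continuousAt_of_dominated
    (bound := fun y => (C * √(k + 1 : ℕ)) ^ (k + 1) * Real.exp (-2 * (a - 1)) *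
      Real.exp (-2 * (a - 1)) ^ k * ∏ i, Real.exp (-2 * y i)) ?_ ?_
      ((integrable_exp_prod k 0).const_mul _) ?_
  · exact Eventually.of_forall fun s =>
      (hcont.comp (Continuous.prodMk_right s)).aestronglyMeasurable
  · filter_upwards [lt_mem_nhds (sub_one_lt a)] with s hs
    refine Eventually.of_forall fun y => (kdet_cons_bound hC hb k s _).trans ?_
    have : ∏ i, Real.exp (-2 * (y i + s))
        = Real.exp (-2 * s) ^ k * ∏ i, Real.exp (-2 * y i) := by
      simp_rw [mul_add, Real.exp_add, Finset.prod_mul_distrib]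
      simp [mul_comm]
    rw [this, ← mul_assoc]
    have he : Real.exp (-2 * s) ≤ Real.exp (-2 * (a - 1)) := Real.exp_le_exp.2 (by linarith)
    have hp : 0 ≤ ∏ i, Real.exp (-2 * y i) := Finset.prod_nonneg fun i _ => (Real.exp_pos _).le
    gcongr
  · exact Eventually.of_forall fun y =>
      (hcont.comp (Continuous.prodMk_left y)).continuousAt

end

/-! ### Slicing by the smallest coordinate -/

/-- The part of `(u, ∞)^{k+1}` on which the coordinate `i` is the strict minimum. -/
def minRegion (k : ℕ) (u : ℝ) (i : Fin (k + 1)) : Set (Fin (k + 1) → ℝ) :=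
  {x | u < x i ∧ ∀ j : Fin k, x i < x (i.succAbove j)}

/-- The region `minRegion k u i` with the minimal coordinate split off. -/
def minRegionProd (k : ℕ) (u : ℝ) : Set (ℝ × (Fin k → ℝ)) :=
  {p | u < p.1 ∧ ∀ j : Fin k, p.1 < p.2 j}

lemma measurableSet_minRegionProd (k : ℕ) (u : ℝ) : MeasurableSet (minRegionProd k u) := by
  have : IsOpen (minRegionProd k u) := by
    have h : minRegionProd k u = {p | u < p.1} ∩ ⋂ j : Fin k, {p | p.1 < p.2 j} := by
      ext p; simp [minRegionProd]
    rw [h]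
    refine (isOpen_lt continuous_const continuous_fst).inter (isOpen_iInter_of_finite fun j => ?_)
    exact isOpen_lt continuous_fst (by fun_prop)
  exact this.measurableSet

lemma minRegion_eq_preimage (k : ℕ) (u : ℝ) (i : Fin (k + 1)) :
    minRegion k u i = MeasurableEquiv.piFinSuccAbove (fun _ => ℝ) i ⁻¹' minRegionProd k u := by
  ext x
  simp [minRegion, minRegionProd, Fin.removeNth]

lemma measurableSet_minRegion (k : ℕ) (u : ℝ) (i : Fin (k + 1)) :
    MeasurableSet (minRegion k u i) := by
  rw [minRegion_eq_preimage]
  exact (MeasurableEquiv.measurable _) (measurableSet_minRegionProd k u)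

lemma minRegion_subset (k : ℕ) (u : ℝ) (i : Fin (k + 1)) :
    minRegion k u i ⊆ Set.univ.pi fun _ => Set.Ioi u := by
  intro x hx j _
  refine Fin.succAboveCases i hx.1 (fun j => ?_) j
  exact hx.1.trans (hx.2 j)

lemma pairwise_disjoint_minRegion (k : ℕ) (u : ℝ) :
    Pairwise (Function.onFun Disjoint (minRegion k u)) := by
  intro i j hij
  rw [Function.onFun, Set.disjoint_left]
  intro x hi hj
  obtain ⟨a, ha⟩ := Fin.exists_succAbove_eq hij.symm
  obtain ⟨b, hb⟩ := Fin.exists_succAbove_eq hij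
  have h1 := hi.2 a
  have h2 := hj.2 b
  rw [ha] at h1
  rw [hb] at h2
  exact lt_asymm h1 h2

lemma ae_coord_ne {k : ℕ} {i j : Fin k} (hij : i ≠ j) : ∀ᵐ x : Fin k → ℝ, x i ≠ x j := by
  let S : Submodule ℝ (Fin k → ℝ) :=
    LinearMap.ker (LinearMap.proj (R := ℝ) (φ := fun _ : Fin k => ℝ) i - LinearMap.proj j)
  have hS : S ≠ ⊤ := by
    intro h
    have hm : (Pi.single i 1 : Fin k → ℝ) ∈ S := h ▸ Submodule.mem_top
    simp [S, hij.symm] at hm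
  have h0 := Measure.addHaar_submodule (volume : Measure (Fin k → ℝ)) S hS
  rw [ae_iff]
  convert h0 using 2
  ext x
  simp [S, sub_eq_zero]

lemma octant_ae_eq_iUnion (k : ℕ) (u : ℝ) :
    (Set.univ.pi fun _ : Fin (k + 1) => Set.Ioi u) =ᵐ[volume] ⋃ i, minRegion k u i := by
  have hne : ∀ᵐ x : Fin (k + 1) → ℝ, ∀ i j, i ≠ j → x i ≠ x j := by
    rw [ae_all_iff]; intro i
    rw [ae_all_iff]; intro j
    by_cases hij : i = j
    · simp [hij]
    · filter_upwards [ae_coord_ne hij] with x hx _ using hx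
  filter_upwards [hne] with x hx
  refine propext ⟨fun h => ?_, fun h => ?_⟩
  · obtain ⟨i, hi⟩ := Finite.exists_min x
    refine Set.mem_iUnion.2 ⟨i, h i trivial, fun j => ?_⟩
    exact lt_of_le_of_ne (hi _) (hx _ _ (Fin.succAbove_ne i j).symm)
  · obtain ⟨i, hi⟩ := Set.mem_iUnion.1 h
    exact minRegion_subset k u i hi

section
variable {K : ℝ → ℝ → ℝ} {C : ℝ}

lemma kdet_cons_piFinSuccAbove {k : ℕ} (i : Fin (k + 1)) (x : Fin (k + 1) → ℝ) :
    kdet K (Fin.cons (MeasurableEquiv.piFinSuccAbove (fun _ => ℝ) i x).1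
      (MeasurableEquiv.piFinSuccAbove (fun _ => ℝ) i x).2 : Fin (k + 1) → ℝ) = kdet K x := by
  rw [← kdet_insertNth K i]
  congr 1
  exact (MeasurableEquiv.piFinSuccAbove (fun _ => ℝ) i).symm_apply_apply x

lemma setIntegral_minRegion {k : ℕ} (u : ℝ) (i : Fin (k + 1)) :
    ∫ x in minRegion k u i, kdet K x
      = ∫ p in minRegionProd k u, kdet K (Fin.cons p.1 p.2 : Fin (k + 1) → ℝ) := by
  have mp := volume_preserving_piFinSuccAbove (fun _ : Fin (k + 1) => ℝ) i
  rw [minRegion_eq_preimage]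
  rw [← mp.setIntegral_preimage_emb (MeasurableEquiv.measurableEmbedding _)]
  simp_rw [kdet_cons_piFinSuccAbove]

lemma integrableOn_minRegionProd (hK : Continuous fun p : ℝ × ℝ => K p.1 p.2) (hC : 0 ≤ C)
    (hb : ∀ x y, |K x y| ≤ C * (Real.exp (-x) * Real.exp (-y))) (k : ℕ) (u : ℝ) :
    IntegrableOn (fun p : ℝ × (Fin k → ℝ) => kdet K (Fin.cons p.1 p.2 : Fin (k + 1) → ℝ))
      (minRegionProd k u) := by
  have mp := volume_preserving_piFinSuccAbove (fun _ : Fin (k + 1) => ℝ) 0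
  have h := (integrableOn_kdet hK hC hb (k + 1) u).mono_set (minRegion_subset k u 0)
  rw [minRegion_eq_preimage] at h
  refine (mp.integrableOn_comp_preimage (MeasurableEquiv.measurableEmbedding _)).1 ?_
  refine h.congr_fun (fun x _ => ?_) ?_
  · exact (kdet_cons_piFinSuccAbove 0 x).symm
  · exact (MeasurableEquiv.measurable _) (measurableSet_minRegionProd k u)

/-- The inner integral over a slice of `minRegionProd`. -/
lemma integral_slice (k : ℕ) (u s : ℝ) :
    ∫ y : Fin k → ℝ, (minRegionProd k u).indicator
        (fun p : ℝ × (Fin k → ℝ) => kdet K (Fin.cons p.1 p.2 : Fin (k + 1) → ℝ)) (s, y)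
      = (Set.Ioi u).indicator (fredJ K k) s := by
  by_cases hs : s ∈ Set.Ioi u
  · rw [Set.indicator_of_mem hs, fredJ, ← integral_indicator (measurableSet_octant k s)]
    congr 1; ext y
    have : (s, y) ∈ minRegionProd k u ↔ y ∈ Set.univ.pi fun _ : Fin k => Set.Ioi s := by
      have hs' : u < s := hs
      simp [minRegionProd, hs']
    by_cases hy : y ∈ Set.univ.pi fun _ : Fin k => Set.Ioi s
    · rw [Set.indicator_of_mem hy, Set.indicator_of_mem (this.2 hy)]
    · rw [Set.indicator_of_notMem hy, Set.indicator_of_notMem (mt this.1 hy)]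
  · rw [Set.indicator_of_notMem hs]
    have : ∀ y : Fin k → ℝ, (s, y) ∉ minRegionProd k u := fun y h => hs h.1
    simp [Set.indicator, this]

lemma integrableOn_fredJ (hK : Continuous fun p : ℝ × ℝ => K p.1 p.2) (hC : 0 ≤ C)
    (hb : ∀ x y, |K x y| ≤ C * (Real.exp (-x) * Real.exp (-y))) (k : ℕ) (u : ℝ) :
    IntegrableOn (fredJ K k) (Set.Ioi u) := by
  have h := (integrableOn_minRegionProd hK hC hb k u).integrable_indicator
    (measurableSet_minRegionProd k u)
  rw [Measure.volume_eq_prod] at h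
  rw [← integrable_indicator_iff measurableSet_Ioi]
  refine h.integral_prod_left.congr (Eventually.of_forall fun s => ?_)
  exact integral_slice k u s

/-- Slicing `(u, ∞)^{k+1}` by the value `s` of its smallest coordinate; by symmetry of the
determinant, each of the `k + 1` possible positions of the minimum contributes equally. -/
lemma fredI_succ (hK : Continuous fun p : ℝ × ℝ => K p.1 p.2) (hC : 0 ≤ C)
    (hb : ∀ x y, |K x y| ≤ C * (Real.exp (-x) * Real.exp (-y))) (k : ℕ) (u : ℝ) :
    fredI K (k + 1) u = (k + 1) * ∫ s in Set.Ioi u, fredJ K k s := by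
  have h1 : ∫ p in minRegionProd k u, kdet K (Fin.cons p.1 p.2 : Fin (k + 1) → ℝ)
      = ∫ s in Set.Ioi u, fredJ K k s := by
    have h := (integrableOn_minRegionProd hK hC hb k u).integrable_indicator
      (measurableSet_minRegionProd k u)
    rw [← integral_indicator (measurableSet_minRegionProd k u), Measure.volume_eq_prod] at *
    rw [integral_prod _ h, ← integral_indicator measurableSet_Ioi]
    congr 1; ext s
    exact integral_slice k u s
  unfold fredI
  rw [setIntegral_congr_set (octant_ae_eq_iUnion k u),
    integral_iUnion_fintype (measurableSet_minRegion k u) (pairwise_disjoint_minRegion k u)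
      (fun i => (integrableOn_kdet hK hC hb (k + 1) u).mono_set (minRegion_subset k u i))]
  simp_rw [setIntegral_minRegion, h1]
  simp

lemma hasDerivAt_fredI_succ (hK : Continuous fun p : ℝ × ℝ => K p.1 p.2) (hC : 0 ≤ C)
    (hb : ∀ x y, |K x y| ≤ C * (Real.exp (-x) * Real.exp (-y))) (k : ℕ) (u : ℝ) :
    HasDerivAt (fredI K (k + 1)) (-((k + 1) * fredJ K k u)) u := by
  have hJc := continuous_fredJ hK hC hb k
  have h : fredI K (k + 1) = fun v =>
      (k + 1) * ((∫ s in Set.Ioi u, fredJ K k s) - ∫ s in u..v, fredJ K k s) := by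
    ext v
    rw [fredI_succ hK hC hb, ← intervalIntegral.integral_interval_add_Ioi
      (integrableOn_fredJ hK hC hb k u) (integrableOn_fredJ hK hC hb k v)]
    ring
  rw [h]
  have hd := intervalIntegral.integral_hasDerivAt_right (hJc.intervalIntegrable u u)
    (hJc.stronglyMeasurableAtFilter _ _) hJc.continuousAt
  simpa using (hd.const_sub (∫ s in Set.Ioi u, fredJ K k s)).const_mul ((k : ℝ) + 1)

lemma fredI_zero (u : ℝ) : fredI K 0 u = 1 := by
  unfold fredI kdet
  rw [volume_restrict_octant]
  simp [Measure.real]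

end

/-! ### Summation of the series -/

/-- The Hadamard bounds `(c√k)^k` are summable against `1/k!`, because `k^k ≤ e^k k!`. -/
lemma summable_hadamard {c : ℝ} (hc : 0 ≤ c) :
    Summable fun k : ℕ => (c * √k) ^ k / (k.factorial : ℝ) := by
  have hs : Summable fun k : ℕ => ((1 / 4 : ℝ) ^ k +
      (4 * c ^ 2 * Real.exp 1) ^ k / (k.factorial : ℝ)) / 2 :=
    ((summable_geometric_of_lt_one (by norm_num) (by norm_num)).add
      (Real.summable_pow_div_factorial _)).div_const 2
  refine Summable.of_nonneg_of_le (fun k => by positivity) (fun k => ?_) hs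
  set a := (c * √k) ^ k / (k.factorial : ℝ) with ha
  have hf : (0 : ℝ) < k.factorial := by exact_mod_cast k.factorial_pos
  have hk : (k : ℝ) ^ k / k.factorial ≤ Real.exp 1 ^ k := by
    rw [← Real.exp_nat_mul, mul_one]
    exact Real.pow_div_factorial_le_exp _ (Nat.cast_nonneg k) k
  have hsq : a ^ 2 ≤ (c ^ 2 * Real.exp 1) ^ k / k.factorial := by
    have : a ^ 2 = (c ^ 2) ^ k * ((k : ℝ) ^ k / k.factorial) / k.factorial := by
      have h1 : ((c * √k) ^ k) ^ 2 = (c ^ 2) ^ k * (k : ℝ) ^ k := by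
        rw [← pow_mul, mul_comm k 2, pow_mul, mul_pow, Real.sq_sqrt (Nat.cast_nonneg k), mul_pow]
      rw [ha, div_pow, h1]; field_simp
    rw [this, mul_pow]
    gcongr
  -- Arithmetic-geometric mean for `2⁻ᵏ` and `2ᵏ a`, whose product is `a`.
  have h2 : ((1 / 2 : ℝ) ^ k) * (2 ^ k * a) = a := by
    rw [← mul_assoc, ← mul_pow]; norm_num
  have h3 : ((1 / 2 : ℝ) ^ k) ^ 2 = (1 / 4) ^ k := by
    rw [← pow_mul, mul_comm k 2, pow_mul]; norm_num
  have h4 : (2 ^ k * a) ^ 2 = 4 ^ k * a ^ 2 := by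
    rw [mul_pow, ← pow_mul, mul_comm k 2, pow_mul]; norm_num
  have h5 : (4 : ℝ) ^ k * a ^ 2 ≤ (4 * c ^ 2 * Real.exp 1) ^ k / k.factorial := by
    calc (4 : ℝ) ^ k * a ^ 2 ≤ 4 ^ k * ((c ^ 2 * Real.exp 1) ^ k / k.factorial) := by gcongr
      _ = _ := by rw [mul_assoc 4, mul_pow 4]; ring
  have h6 := two_mul_le_add_sq ((1 / 2 : ℝ) ^ k) (2 ^ k * a)
  rw [mul_assoc, h2, h3, h4] at h6
  linarith

lemma abs_sign_div_factorial (k : ℕ) :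
    |(-1 : ℝ) ^ k / (k.factorial : ℝ)| = 1 / (k.factorial : ℝ) := by
  rw [abs_div, abs_pow, abs_neg, abs_one, one_pow, Nat.abs_cast]

section
variable {K : ℝ → ℝ → ℝ} {C : ℝ}

lemma summable_abs_fredI (hC : 0 ≤ C)
    (hb : ∀ x y, |K x y| ≤ C * (Real.exp (-x) * Real.exp (-y))) (t : ℝ) :
    Summable fun k : ℕ => |((-1 : ℝ) ^ k / (k.factorial : ℝ)) * fredI K k t| := by
  refine Summable.of_nonneg_of_le (fun k => abs_nonneg _) (fun k => ?_)
    (summable_hadamard (c := C * (Real.exp (-2 * t) / 2)) (by positivity))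
  rw [abs_mul, abs_sign_div_factorial]
  calc _ ≤ 1 / (k.factorial : ℝ) * ((C * √k) ^ k * (Real.exp (-2 * t) / 2) ^ k) := by
        gcongr; exact abs_fredI_le hC hb k t
    _ = _ := by rw [← mul_pow]; ring

lemma abs_fredJ_term_le (hC : 0 ≤ C)
    (hb : ∀ x y, |K x y| ≤ C * (Real.exp (-x) * Real.exp (-y))) {E u : ℝ}
    (hu : Real.exp (-2 * u) ≤ E) (k : ℕ) :
    |((-1 : ℝ) ^ k / (k.factorial : ℝ)) * fredJ K k u| ≤
      (2 * C * E * √(k + 1 : ℕ)) ^ (k + 1) / ((k + 1).factorial : ℝ) := by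
  have hE : 0 < E := (Real.exp_pos _).trans_le hu
  have hf : (0 : ℝ) < k.factorial := by exact_mod_cast k.factorial_pos
  rw [abs_mul, abs_sign_div_factorial]
  have h2 : ((k : ℝ) + 1) ≤ 2 ^ (k + 1) := by
    exact_mod_cast (Nat.lt_two_pow_self (n := k + 1)).le
  calc _ ≤ 1 / (k.factorial : ℝ) * ((C * √(k + 1 : ℕ)) ^ (k + 1) * E * E ^ k) := by
        gcongr
        refine (abs_fredJ_le hC hb k u).trans ?_
        have : Real.exp (-2 * u) / 2 ≤ E := by linarith [Real.exp_pos (-2 * u)]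
        gcongr
    _ = ((k : ℝ) + 1) * ((C * E * √(k + 1 : ℕ)) ^ (k + 1) / ((k + 1).factorial : ℝ)) := by
        rw [Nat.factorial_succ, Nat.cast_mul, mul_right_comm C E, mul_pow _ E]
        push_cast
        field_simp
        ring
    _ ≤ 2 ^ (k + 1) * ((C * E * √(k + 1 : ℕ)) ^ (k + 1) / ((k + 1).factorial : ℝ)) := by gcongr
    _ = _ := by rw [mul_assoc 2 C E, mul_assoc 2, mul_pow 2]; ring

/-- Termwise differentiation: on `(t - 1, ∞)` the derivatives of the terms are dominated by the
summable Hadamard bounds, and the derivative of the term `k + 1` is the term `k` of the new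
series. -/
theorem fredholm_hasDerivAt (hK : Continuous fun p : ℝ × ℝ => K p.1 p.2) (hC : 0 ≤ C)
    (hb : ∀ x y, |K x y| ≤ C * (Real.exp (-x) * Real.exp (-y))) (t : ℝ) :
    HasDerivAt (fun u => ∑' k : ℕ, ((-1 : ℝ) ^ k / (k.factorial : ℝ)) * fredI K k u)
      (∑' k : ℕ, ((-1 : ℝ) ^ k / (k.factorial : ℝ)) * fredJ K k t) t := by
  let g' : ℕ → ℝ → ℝ := fun n u => match n with
    | 0 => 0
    | k + 1 => ((-1 : ℝ) ^ k / (k.factorial : ℝ)) * fredJ K k u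
  set E := Real.exp (-2 * (t - 1)) with hE
  have hs := summable_hadamard (c := 2 * C * E) (by positivity)
  have hg : ∀ n u, u ∈ Set.Ioi (t - 1) →
      HasDerivAt (fun u => ((-1 : ℝ) ^ n / (n.factorial : ℝ)) * fredI K n u) (g' n u) u := by
    intro n u _
    cases n with
    | zero =>
      simp only [fredI_zero, g']
      exact hasDerivAt_const _ _
    | succ k =>
      refine ((hasDerivAt_fredI_succ hK hC hb k u).const_mul
        ((-1 : ℝ) ^ (k + 1) / ((k + 1).factorial : ℝ))).congr_deriv ?_
      have hf : (k.factorial : ℝ) ≠ 0 := by exact_mod_cast k.factorial_ne_zero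
      simp only [g']
      rw [Nat.factorial_succ, pow_succ]
      push_cast
      field_simp
  have hg' : ∀ n u, u ∈ Set.Ioi (t - 1) →
      ‖g' n u‖ ≤ (2 * C * E * √(n : ℕ)) ^ n / (n.factorial : ℝ) := by
    intro n u hu
    cases n with
    | zero => simp [g']
    | succ k =>
      refine abs_fredJ_term_le hC hb ?_ k
      have : t - 1 < u := hu
      exact Real.exp_le_exp.2 (by linarith)
  have ht : t ∈ Set.Ioi (t - 1) := sub_one_lt t
  have main := hasDerivAt_tsum_of_isPreconnected hs isOpen_Ioi isPreconnected_Ioi hg hg' ht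
    (summable_abs_fredI hC hb t).of_abs ht
  have hsum : Summable fun n => g' n t := Summable.of_norm_bounded hs fun n => hg' n t ht
  rw [hsum.tsum_eq_zero_add] at main
  simpa [g'] using main

end

/-- The Fredholm series `F(t) = Σ_k ((−1)^k/k!) ∫_{(t,∞)^k} det[A(x_a,x_b)]_{1≤a,b≤k} dx`
(the Tracy–Widom GUE distribution function) converges absolutely for every `t`, is
differentiable, and
`F′(t) = Σ_k ((−1)^k/k!) ∫_{(t,∞)^k} det[A(x_a,x_b)]_{0≤a,b≤k} dx` with `x₀ = t`. -/
theorem tracy_widom_derivative (t : ℝ) :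
    (Summable fun k : ℕ =>
      |((-1 : ℝ) ^ k / (k.factorial : ℝ)) *
        ∫ x : Fin k → ℝ in Set.univ.pi fun _ => Set.Ioi t,
          Matrix.det (Matrix.of fun a b : Fin k => airyKernel (x a) (x b))|) ∧
    HasDerivAt
      (fun u : ℝ => ∑' k : ℕ,
        ((-1 : ℝ) ^ k / (k.factorial : ℝ)) *
          ∫ x : Fin k → ℝ in Set.univ.pi fun _ => Set.Ioi u,
            Matrix.det (Matrix.of fun a b : Fin k => airyKernel (x a) (x b)))
      (∑' k : ℕ,
        ((-1 : ℝ) ^ k / (k.factorial : ℝ)) *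
          ∫ x : Fin k → ℝ in Set.univ.pi fun _ => Set.Ioi t,
            Matrix.det (Matrix.of fun a b : Fin (k + 1) =>
              airyKernel ((Fin.cons t x : Fin (k + 1) → ℝ) a)
                ((Fin.cons t x : Fin (k + 1) → ℝ) b)))
      t := by
  obtain ⟨hK, C, hC, hb⟩ := airyKernel_props
  exact ⟨summable_abs_fredI hC hb t, fredholm_hasDerivAt hK hC hb t⟩
end
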